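/- (Theorem 4.1(iii), first case.) Uniformly over all λ ∈ C⁺ with α_λ ≤ β_λ and all X ∈ a with x2 ≥ x3 ≥ x1, one has E_k(X,λ) ≍ e^{⟨λ,X⁺⟩} / [ (1+α_λ α_{X⁺})^{k+1} (1+β_λ β_{X⁺})^{k+1} (1+γ_λ γ_{X⁺})^{k} ]. -/

import Mathlib

open Real MeasureTheory

/-- The rank-one Dunkl kernel `E_k^{rk1}(x,v)`. -/
noncomputable def Erk1 (k x v : ℝ) : ℝ :=
  (Real.Gamma (k + 1/2) / (Real.sqrt Real.pi * Real.Gamma k)) *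
    ∫ z in (-1 : ℝ)..1, Real.exp (z * x * v) * (1 - z) ^ (k - 1) * (1 + z) ^ k

/-- The normalized modified Bessel function `𝒥_a(y)`, for `a > -1/2`. -/
noncomputable def besselJ (a y : ℝ) : ℝ :=
  (Real.Gamma (a + 1) / (Real.sqrt Real.pi * Real.Gamma (a + 1/2))) *
    ∫ z in (-1 : ℝ)..1, Real.exp (y * z) * (1 - z ^ 2) ^ (a - 1/2)

/-- `W_k(λ,ν)`. -/
noncomputable def Wk (k l1 l2 l3 n1 n2 : ℝ) : ℝ :=
  ((l1 - n1) * (l1 - n2) * (n1 - l2) * (l2 - n2) * (n1 - l3) * (n2 - l3)) ^ (k - 1)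

/-- `V(λ) = (λ1-λ2)(λ1-λ3)(λ2-λ3)`. -/
def Vlam (l1 l2 l3 : ℝ) : ℝ := (l1 - l2) * (l1 - l3) * (l2 - l3)

/-- The `A₂` Dunkl kernel `E_k(X,λ)`, defined via the rank-one kernel formula. -/
noncomputable def EkA2 (k x1 x2 x3 l1 l2 l3 : ℝ) : ℝ :=
  (3 * Real.Gamma (3 * k) / (Vlam l1 l2 l3 ^ (2 * k) * Real.Gamma k ^ 2)) *
    ∫ n2 in l3..l2, ∫ n1 in l2..l1,
      ((n1 - l2) * (l1 - n2) * Erk1 k ((x1 - x2) / 2) (n1 - n2)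
        + (l1 - n1) * (l2 - n2) * Erk1 k (-(x1 - x2) / 2) (n1 - n2))
      * ((n1 - l3) * (n2 - l3)) * Real.exp ((x1 + x2 - 2 * x3) * (n1 + n2) / 2)
      * Wk k l1 l2 l3 n1 n2

/-!
In the root coordinates `a = l1 - l2`, `b = l2 - l3`, `p = x2 - x3`, `q = x3 - x1`, the
substitution `u = l1 - n1`, `w = n2 - l3` extracts from the kernel the factor
`exp (l1 * p - l3 * q)` and leaves an integral over `(0, b) × (0, a)` in which `u` and `w` carry
the weights `exp (-p * u) * u ^ (k - 1) * (a - u) ^ (k - 1)` and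
`exp (-q * w) * w ^ k * (b - w) ^ (k - 1)`. The remaining factors are powers and a combination of
two rank-one kernels, with leading exponential removed, in `y = (p + q) * (a + b - u - w)`.

Everything reduces to the estimate
`∫ u in (0, a), exp (-p * u) * u ^ A * (a - u) ^ B ≍ a ^ (A + B + 1) * (1 + a * p) ^ (-(A + 1))`,
which also describes the rank-one kernels. For the upper bound, `1 + (p + q) * (a + b - u - w)` is
compared with `1 + (a + b) * (p + q)` and `1 + a * p` at the cost of polynomials in `p * u` and
`q * w`, which are absorbed by halving the exponents `p` and `q`; the integrand is then dominated by
a product of two beta weights. For the lower bound one of the two rank-one terms suffices. Since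
`a ≤ b`, the sum `a + b` is comparable to `b` throughout.
-/

section

open Set

theorem one_add_rpow_le_mul_exp_half {m x : ℝ} (hm : 0 ≤ m) (hx : 0 ≤ x) :
    (1 + x) ^ m ≤ (2 * m) ^ m * exp (1 / 2) * exp (x / 2) := by
  have h := ProbabilityTheory.rpow_abs_le_mul_exp_abs (1 + x) hm (one_half_pos (α := ℝ)).ne'
  rw [abs_of_nonneg (by positivity : 0 ≤ 1 + x), abs_of_pos (one_half_pos (α := ℝ))] at h
  rw [mul_assoc, ← exp_add]
  convert h using 2 <;> ring_nf

theorem rpow_mem_Icc_of_mem_Icc_half_one (B : ℝ) {x : ℝ} (hx : x ∈ Icc (1 / 2) 1) :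
    x ^ B ∈ Icc ((2 ^ |B|)⁻¹) (2 ^ |B|) := by
  have hx0 : 0 < x := by linarith [hx.1]
  have hlog : |log x * B| ≤ log 2 * |B| := by
    rw [abs_mul, abs_of_nonpos (log_nonpos hx0.le hx.2)]
    gcongr
    rw [← log_inv]
    exact log_le_log (inv_pos.2 hx0) (inv_le_of_inv_le₀ two_pos (by linarith [hx.1]))
  rw [rpow_def_of_pos hx0, rpow_def_of_pos two_pos, ← exp_neg]
  exact ⟨exp_le_exp.2 (abs_le.1 hlog).1, exp_le_exp.2 (abs_le.1 hlog).2⟩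

theorem one_add_half_rpow_neg_le {y m : ℝ} (hy : 0 ≤ y) (hm : 0 ≤ m) :
    (1 + y / 2) ^ (-m) ≤ 2 ^ m * (1 + y) ^ (-m) := by
  calc (1 + y / 2) ^ (-m) ≤ (2⁻¹ * (1 + y)) ^ (-m) :=
        rpow_le_rpow_of_nonpos (by positivity) (by linarith) (by linarith)
    _ = 2 ^ m * (1 + y) ^ (-m) := by
        rw [mul_rpow (by norm_num) (by positivity), inv_rpow zero_le_two, rpow_neg zero_le_two,
          inv_inv]

end

/-! ### Laplace transforms of beta weights -/

/-- The beta weight `u ^ A * (a - u) ^ B` of the interval `(0, a)`, damped by `exp (-p * u)`. -/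
noncomputable def expBetaWeight (A B a p u : ℝ) : ℝ :=
  exp (-p * u) * u ^ A * (a - u) ^ B

/-- The Laplace transform at `p` of the beta weight on `(0, a)`. Up to scaling it is a confluent
hypergeometric function; it governs the rank-one kernel as well as the outer integrals. -/
noncomputable def betaLaplace (A B a p : ℝ) : ℝ :=
  ∫ u in Set.Ioo 0 a, expBetaWeight A B a p u

section

open Set

variable {A B a p u : ℝ}

theorem expBetaWeight_pos (hu : u ∈ Ioo 0 a) : 0 < expBetaWeight A B a p u := by
  have := hu.1
  have := sub_pos.2 hu.2
  unfold expBetaWeight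
  positivity

theorem expBetaWeight_mul_self (hu : 0 < u) :
    expBetaWeight A B a p u * u = expBetaWeight (A + 1) B a p u := by
  rw [expBetaWeight, expBetaWeight, rpow_add_one hu.ne']
  ring

theorem expBetaWeight_mul_sub_rpow (hu : u < a) (s : ℝ) :
    expBetaWeight A B a p u * (a - u) ^ s = expBetaWeight A (B + s) a p u := by
  rw [expBetaWeight, expBetaWeight, rpow_add (sub_pos.2 hu), mul_assoc]

theorem expBetaWeight_mul_sub (hu : u < a) :
    expBetaWeight A B a p u * (a - u) = expBetaWeight A (B + 1) a p u := by
  simpa only [rpow_one] using expBetaWeight_mul_sub_rpow hu 1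

theorem expBetaWeight_reflect (A B a p u : ℝ) :
    expBetaWeight A B a p (a - u) = exp (-p * a) * expBetaWeight B A a (-p) u := by
  have h : exp (-p * (a - u)) = exp (-p * a) * exp (-(-p) * u) := by
    rw [← exp_add]; ring_nf
  rw [expBetaWeight, expBetaWeight, h, sub_sub_cancel]
  ring

theorem expBetaWeight_scale {t : ℝ} (ha : 0 < a) (ht : t ∈ Ioo 0 1) :
    expBetaWeight A B a p (a * t) = a ^ (A + B) * expBetaWeight A B 1 (a * p) t := by
  rw [expBetaWeight, expBetaWeight, show a - a * t = a * (1 - t) by ring,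
    mul_rpow ha.le ht.1.le, mul_rpow ha.le (sub_pos.2 ht.2).le, rpow_add ha]
  ring_nf

theorem one_add_rpow_mul_expBetaWeight_le {m : ℝ} (hm : 0 ≤ m) (hp : 0 ≤ p) (hu : u ∈ Ioo 0 a) :
    (1 + p * u) ^ m * expBetaWeight A B a p u ≤
      (2 * m) ^ m * exp (1 / 2) * expBetaWeight A B a (p / 2) u := by
  have hu0 := hu.1
  have hexp : exp (p * u / 2) * exp (-p * u) = exp (-(p / 2) * u) := by
    rw [← exp_add]; ring_nf
  calc (1 + p * u) ^ m * expBetaWeight A B a p u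
      ≤ (2 * m) ^ m * exp (1 / 2) * exp (p * u / 2) * expBetaWeight A B a p u :=
        mul_le_mul_of_nonneg_right (one_add_rpow_le_mul_exp_half hm (by positivity))
          (expBetaWeight_pos hu).le
    _ = (2 * m) ^ m * exp (1 / 2) * expBetaWeight A B a (p / 2) u := by
        rw [expBetaWeight, expBetaWeight, ← hexp]; ring

theorem measurable_expBetaWeight (A B a p : ℝ) : Measurable (expBetaWeight A B a p) := by
  unfold expBetaWeight
  fun_prop

theorem intervalIntegrable_expBetaWeight_left_half (hA : -1 < A) (ha : 0 < a) :
    IntervalIntegrable (expBetaWeight A B a p) volume 0 (a / 2) := by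
  have hcont : ContinuousOn (fun u => exp (-p * u) * (a - u) ^ B) (uIcc 0 (a / 2)) := by
    refine (Continuous.continuousOn (by fun_prop)).mul
      (ContinuousOn.rpow_const (by fun_prop) fun u hu => Or.inl ?_)
    rw [uIcc_of_le (by positivity)] at hu
    linarith [hu.2]
  refine ((intervalIntegral.intervalIntegrable_rpow' hA).mul_continuousOn hcont).congr
    fun u _ => ?_
  simp only [expBetaWeight]
  ring

theorem integrableOn_expBetaWeight (hA : -1 < A) (hB : -1 < B) (ha : 0 < a) :
    IntegrableOn (expBetaWeight A B a p) (Ioo 0 a) := by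
  rw [← intervalIntegrable_iff_integrableOn_Ioo_of_le ha.le]
  refine (intervalIntegrable_expBetaWeight_left_half hA ha).trans ?_
  have hright := ((intervalIntegrable_expBetaWeight_left_half (A := B) (B := A) (p := -p) hB
    ha).comp_sub_left a).const_mul (exp (-p * a))
  rw [sub_zero, sub_half] at hright
  simpa only [← expBetaWeight_reflect, sub_sub_cancel] using hright.symm

theorem betaLaplace_nonneg : 0 ≤ betaLaplace A B a p :=
  setIntegral_nonneg measurableSet_Ioo fun _ hu => (expBetaWeight_pos hu).le

theorem measurable_betaLaplace (A B a : ℝ) : Measurable (betaLaplace A B a) := by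
  refine (StronglyMeasurable.integral_prod_right (Measurable.stronglyMeasurable ?_)).measurable
  simp only [Function.uncurry_def, expBetaWeight]
  fun_prop

theorem betaLaplace_eq_rpow_mul (ha : 0 < a) :
    betaLaplace A B a p = a ^ (A + B + 1) * betaLaplace A B 1 (a * p) := by
  have hsubst : a * ∫ t in Ioo 0 1, expBetaWeight A B a p (a * t) = betaLaplace A B a p := by
    have h := intervalIntegral.mul_integral_comp_mul_left (a := 0) (b := 1) (c := a)
      (f := expBetaWeight A B a p)
    rwa [mul_zero, mul_one, intervalIntegral.integral_of_le ha.le, integral_Ioc_eq_integral_Ioo,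
      intervalIntegral.integral_of_le zero_le_one, integral_Ioc_eq_integral_Ioo] at h
  rw [← hsubst, setIntegral_congr_fun measurableSet_Ioo fun t ht => expBetaWeight_scale ha ht,
    integral_const_mul, rpow_add_one ha.ne', betaLaplace]
  ring

theorem expBetaWeight_le_expBetaWeight {q : ℝ} (hpq : p ≤ q) (hu : u ∈ Ioo 0 a) :
    expBetaWeight A B a q u ≤ expBetaWeight A B a p u := by
  have hu0 := hu.1
  have hau := sub_pos.2 hu.2
  unfold expBetaWeight
  gcongr

theorem expBetaWeight_one_le_of_le_half {y t : ℝ} (ht : t ∈ Ioc 0 (1 / 2)) :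
    expBetaWeight A B 1 y t ≤ exp 1 * 2 ^ |B| * (t ^ A * exp (-((1 + y) * t))) := by
  have ht0 := ht.1
  have ht1 : 0 < 1 - t := by linarith [ht.2]
  have hB := (rpow_mem_Icc_of_mem_Icc_half_one B (x := 1 - t)
    ⟨by linarith [ht.2], by linarith⟩).2
  have hexp : exp (-y * t) ≤ exp 1 * exp (-((1 + y) * t)) := by
    rw [← exp_add]
    exact exp_le_exp.2 (by linarith [ht.2])
  calc exp (-y * t) * t ^ A * (1 - t) ^ B
      ≤ exp 1 * exp (-((1 + y) * t)) * t ^ A * 2 ^ |B| := by gcongr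
    _ = exp 1 * 2 ^ |B| * (t ^ A * exp (-((1 + y) * t))) := by ring

theorem expBetaWeight_one_le_of_half_le {m y t : ℝ} (hm : 0 ≤ m) (hy : 0 ≤ y)
    (ht : t ∈ Ico (1 / 2) 1) :
    expBetaWeight A B 1 y t ≤
      2 ^ m * ((2 * m) ^ m * exp (1 / 2)) * (1 + y) ^ (-m) * expBetaWeight A B 1 0 t := by
  have ht1 : t ∈ Ioo 0 1 := ⟨by linarith [ht.1], ht.2⟩
  have hpow : (1 + y) ^ m ≤ 2 ^ m * (1 + y * t) ^ m := by
    rw [← mul_rpow zero_le_two (by nlinarith [ht.1])]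
    exact rpow_le_rpow (by positivity) (by nlinarith [ht.1]) hm
  rw [rpow_neg (by positivity), mul_right_comm, ← div_eq_mul_inv, le_div_iff₀ (by positivity)]
  calc expBetaWeight A B 1 y t * (1 + y) ^ m
      ≤ expBetaWeight A B 1 y t * (2 ^ m * (1 + y * t) ^ m) :=
        mul_le_mul_of_nonneg_left hpow (expBetaWeight_pos ht1).le
    _ = 2 ^ m * ((1 + y * t) ^ m * expBetaWeight A B 1 y t) := by ring
    _ ≤ 2 ^ m * ((2 * m) ^ m * exp (1 / 2) * expBetaWeight A B 1 (y / 2) t) := by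
        exact mul_le_mul_of_nonneg_left (one_add_rpow_mul_expBetaWeight_le hm hy ht1)
          (by positivity)
    _ ≤ 2 ^ m * ((2 * m) ^ m * exp (1 / 2) * expBetaWeight A B 1 0 t) := by
        gcongr
        exact expBetaWeight_le_expBetaWeight (by positivity) ht1
    _ = 2 ^ m * ((2 * m) ^ m * exp (1 / 2)) * expBetaWeight A B 1 0 t := by ring

theorem integrableOn_Ioi_rpow_mul_exp_neg_mul {r : ℝ} (hA : -1 < A) (hr : 0 < r) :
    IntegrableOn (fun t => t ^ A * exp (-(r * t))) (Ioi 0) := by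
  simpa only [rpow_one, neg_mul] using integrableOn_rpow_mul_exp_neg_mul_rpow hA one_pos hr

theorem setIntegral_Ioo_rpow_mul_exp_neg_mul_le {r : ℝ} (hA : -1 < A) (hr : 0 < r) :
    ∫ t in Ioo 0 a, t ^ A * exp (-(r * t)) ≤ Gamma (A + 1) * r ^ (-(A + 1)) := by
  calc ∫ t in Ioo 0 a, t ^ A * exp (-(r * t))
      ≤ ∫ t in Ioi 0, t ^ A * exp (-(r * t)) := by
        refine setIntegral_mono_set (integrableOn_Ioi_rpow_mul_exp_neg_mul hA hr) ?_
          Ioo_subset_Ioi_self.eventuallyLE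
        filter_upwards [ae_restrict_mem measurableSet_Ioi] with t ht
        exact mul_nonneg (rpow_nonneg (mem_Ioi.1 ht).le A) (exp_pos _).le
    _ = Gamma (A + 1) * r ^ (-(A + 1)) := by
        have h := integral_rpow_mul_exp_neg_mul_Ioi (a := A + 1) (by linarith) hr
        rw [add_sub_cancel_right] at h
        rw [h, rpow_neg hr.le, one_div, inv_rpow hr.le, mul_comm]

-- The mass near `0` is that of the Gamma integral; the rest decays exponentially in `y`.
theorem exists_betaLaplace_one_le (hA : -1 < A) (hB : -1 < B) :
    ∃ C > 0, ∀ y, 0 ≤ y → betaLaplace A B 1 y ≤ C * (1 + y) ^ (-(A + 1)) := by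
  have hA1 : 0 < A + 1 := by linarith
  set C₀ := exp 1 * 2 ^ |B|
  set C₁ := 2 ^ (A + 1) * ((2 * (A + 1)) ^ (A + 1) * exp (1 / 2))
  refine ⟨C₀ * Gamma (A + 1) + C₁ * betaLaplace A B 1 0,
    add_pos_of_pos_of_nonneg (mul_pos (by positivity) (Gamma_pos_of_pos hA1))
      (mul_nonneg (by positivity) betaLaplace_nonneg), fun y hy => ?_⟩
  set r := (1 + y) ^ (-(A + 1))
  have hgamma : IntegrableOn (fun t => t ^ A * exp (-((1 + y) * t))) (Ioo 0 1) :=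
    (integrableOn_Ioi_rpow_mul_exp_neg_mul hA (by positivity)).mono_set Ioo_subset_Ioi_self
  have hbeta : IntegrableOn (expBetaWeight A B 1 0) (Ioo 0 1) :=
    integrableOn_expBetaWeight hA hB one_pos
  have hmajorant : ∀ t ∈ Ioo 0 1, expBetaWeight A B 1 y t ≤
      C₀ * (t ^ A * exp (-((1 + y) * t))) + C₁ * r * expBetaWeight A B 1 0 t := by
    intro t ht
    have ht0 := ht.1
    have hpos := expBetaWeight_pos (A := A) (B := B) (p := 0) ht
    rcases le_total t (1 / 2) with h | h
    · exact (expBetaWeight_one_le_of_le_half ⟨ht.1, h⟩).trans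
        (le_add_of_nonneg_right (by positivity))
    · exact (expBetaWeight_one_le_of_half_le hA1.le hy ⟨h, ht.2⟩).trans
        (le_add_of_nonneg_left (by positivity))
  calc betaLaplace A B 1 y
      ≤ ∫ t in Ioo 0 1, (C₀ * (t ^ A * exp (-((1 + y) * t))) +
          C₁ * r * expBetaWeight A B 1 0 t) :=
        setIntegral_mono_on (integrableOn_expBetaWeight hA hB one_pos)
          ((hgamma.const_mul _).add (hbeta.const_mul _)) measurableSet_Ioo hmajorant
    _ = C₀ * (∫ t in Ioo 0 1, t ^ A * exp (-((1 + y) * t))) +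
          C₁ * r * betaLaplace A B 1 0 := by
        rw [integral_add (hgamma.const_mul _) (hbeta.const_mul _), integral_const_mul,
          integral_const_mul, betaLaplace]
    _ ≤ C₀ * (Gamma (A + 1) * r) + C₁ * r * betaLaplace A B 1 0 := by
        gcongr
        exact setIntegral_Ioo_rpow_mul_exp_neg_mul_le hA (by positivity)
    _ = (C₀ * Gamma (A + 1) + C₁ * betaLaplace A B 1 0) * r := by ring

theorem setIntegral_Ioo_rpow (hA : -1 < A) (ha : 0 ≤ a) :
    ∫ t in Ioo 0 a, t ^ A = a ^ (A + 1) / (A + 1) := by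
  rw [← integral_Ioc_eq_integral_Ioo, ← intervalIntegral.integral_of_le ha,
    integral_rpow (Or.inl hA), zero_rpow (by linarith), sub_zero]

theorem exists_le_betaLaplace_one (hA : -1 < A) (hB : -1 < B) :
    ∃ c > 0, ∀ y, 0 ≤ y → c * (1 + y) ^ (-(A + 1)) ≤ betaLaplace A B 1 y := by
  have hA1 : 0 < A + 1 := by linarith
  set c₀ := exp (-1) * (2 ^ |B|)⁻¹ with hc₀
  refine ⟨c₀ * ((2⁻¹) ^ (A + 1) / (A + 1)), by positivity, fun y hy => ?_⟩
  set d := 2⁻¹ * (1 + y)⁻¹ with hd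
  have hd0 : 0 < d := by positivity
  have hdy : d * (1 + y) = 1 / 2 := by rw [hd]; field_simp
  have hd1 : d ≤ 1 / 2 := by nlinarith
  have hsub : Ioo 0 d ⊆ Ioo 0 1 := Ioo_subset_Ioo_right (by linarith)
  have hint := integrableOn_expBetaWeight (p := y) hA hB one_pos
  have hpow : IntegrableOn (fun t : ℝ => t ^ A) (Ioo 0 d) :=
    (intervalIntegrable_iff_integrableOn_Ioo_of_le hd0.le).1
      (intervalIntegral.intervalIntegrable_rpow' hA)
  have hminorant : ∀ t ∈ Ioo 0 d, c₀ * t ^ A ≤ expBetaWeight A B 1 y t := by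
    intro t ht
    have ht0 := ht.1
    have hB := (rpow_mem_Icc_of_mem_Icc_half_one B (x := 1 - t)
      ⟨by linarith [ht.2], by linarith⟩).1
    have hexp : exp (-1) ≤ exp (-y * t) := exp_le_exp.2 (by nlinarith [ht.2])
    rw [hc₀, mul_right_comm, expBetaWeight]
    gcongr
  calc c₀ * ((2⁻¹) ^ (A + 1) / (A + 1)) * (1 + y) ^ (-(A + 1))
      = c₀ * ∫ t in Ioo 0 d, t ^ A := by
        rw [setIntegral_Ioo_rpow hA hd0.le, hd, mul_rpow (by norm_num) (by positivity),
          inv_rpow (by positivity : 0 ≤ 1 + y), rpow_neg (by positivity)]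
        ring
    _ ≤ ∫ t in Ioo 0 d, expBetaWeight A B 1 y t := by
        rw [← integral_const_mul]
        exact setIntegral_mono_on (hpow.const_mul _) (hint.mono_set hsub) measurableSet_Ioo
          hminorant
    _ ≤ betaLaplace A B 1 y := by
        refine setIntegral_mono_set hint ?_ hsub.eventuallyLE
        filter_upwards [ae_restrict_mem measurableSet_Ioo] with t ht
        exact (expBetaWeight_pos ht).le

theorem exists_betaLaplace_le (hA : -1 < A) (hB : -1 < B) :
    ∃ C > 0, ∀ a p, 0 < a → 0 ≤ p →
      betaLaplace A B a p ≤ C * (a ^ (A + B + 1) * (1 + a * p) ^ (-(A + 1))) := by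
  obtain ⟨C, hC, h⟩ := exists_betaLaplace_one_le hA hB
  refine ⟨C, hC, fun a p ha hp => ?_⟩
  rw [betaLaplace_eq_rpow_mul ha, mul_left_comm]
  gcongr
  exact h _ (by positivity)

theorem exists_le_betaLaplace (hA : -1 < A) (hB : -1 < B) :
    ∃ c > 0, ∀ a p, 0 < a → 0 ≤ p →
      c * (a ^ (A + B + 1) * (1 + a * p) ^ (-(A + 1))) ≤ betaLaplace A B a p := by
  obtain ⟨c, hc, h⟩ := exists_le_betaLaplace_one hA hB
  refine ⟨c, hc, fun a p ha hp => ?_⟩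
  rw [betaLaplace_eq_rpow_mul ha, mul_left_comm]
  gcongr
  exact h _ (by positivity)

end

/-! ### The rank-one kernel -/

theorem intervalIntegral_exp_mul_mul_rpow (A B y : ℝ) :
    ∫ z in (-1 : ℝ)..1, exp (z * y) * (1 - z) ^ A * (1 + z) ^ B = exp y * betaLaplace A B 2 y := by
  have hsubst := intervalIntegral.integral_comp_sub_left (a := 0) (b := 2)
    (fun z : ℝ => exp (z * y) * (1 - z) ^ A * (1 + z) ^ B) 1
  rw [show (1 : ℝ) - 2 = -1 by norm_num, sub_zero] at hsubst
  rw [← hsubst, intervalIntegral.integral_of_le zero_le_two, integral_Ioc_eq_integral_Ioo,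
    betaLaplace, ← integral_const_mul]
  congr 1 with u
  have hexp : exp ((1 - u) * y) = exp y * exp (-y * u) := by
    rw [← exp_add]; ring_nf
  rw [hexp, sub_sub_cancel, ← add_sub_assoc, one_add_one_eq_two, expBetaWeight]
  ring

theorem Erk1_eq_betaLaplace (k x v : ℝ) :
    Erk1 k x v =
      Gamma (k + 1 / 2) / (√π * Gamma k) * (exp (x * v) * betaLaplace (k - 1) k 2 (x * v)) := by
  simp only [Erk1, mul_assoc _ x v, intervalIntegral_exp_mul_mul_rpow]

theorem Erk1_neg_eq_betaLaplace (k x v : ℝ) :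
    Erk1 k (-x) v =
      Gamma (k + 1 / 2) / (√π * Gamma k) * (exp (x * v) * betaLaplace k (k - 1) 2 (x * v)) := by
  rw [Erk1, ← intervalIntegral_exp_mul_mul_rpow]
  have hreflect := intervalIntegral.integral_comp_neg (a := -1) (b := 1)
    (fun z : ℝ => exp (z * -x * v) * (1 - z) ^ (k - 1) * (1 + z) ^ k)
  rw [neg_neg] at hreflect
  rw [← hreflect]
  congr 2 with z
  ring_nf

section

open Set

variable {α β : Type*} [MeasurableSpace α] [MeasurableSpace β] {μ : Measure α} {ν : Measure β}
  {s : Set α} {t : Set β} {f : α → ℝ} {g : β → ℝ} {K : α → β → ℝ}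

theorem setIntegral_setIntegral_le_mul (hs : MeasurableSet s) (ht : MeasurableSet t)
    (hf : IntegrableOn f s μ) (hg : IntegrableOn g t ν) (hK : ∀ x ∈ s, ∀ y ∈ t, 0 ≤ K x y)
    (hle : ∀ x ∈ s, ∀ y ∈ t, K x y ≤ f x * g y) :
    ∫ x in s, ∫ y in t, K x y ∂ν ∂μ ≤ (∫ x in s, f x ∂μ) * ∫ y in t, g y ∂ν := by
  have hinner : ∀ x ∈ s, ∫ y in t, K x y ∂ν ≤ f x * ∫ y in t, g y ∂ν := fun x hx => by
    rw [← integral_const_mul]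
    exact integral_mono_of_nonneg (ae_restrict_of_forall_mem ht (hK x hx)) (hg.const_mul _)
      (ae_restrict_of_forall_mem ht (hle x hx))
  rw [← integral_mul_const]
  exact integral_mono_of_nonneg
    (ae_restrict_of_forall_mem hs fun x hx => setIntegral_nonneg ht (hK x hx))
    (hf.mul_const _) (ae_restrict_of_forall_mem hs hinner)

variable [SFinite μ] [SFinite ν]

theorem integrableOn_mul_prod (hf : IntegrableOn f s μ) (hg : IntegrableOn g t ν) :
    IntegrableOn (fun z : α × β => f z.1 * g z.2) (s ×ˢ t) (μ.prod ν) := by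
  rw [IntegrableOn, ← Measure.prod_restrict]
  exact hf.mul_prod hg

theorem mul_le_setIntegral_setIntegral (hs : MeasurableSet s) (ht : MeasurableSet t)
    (hf : IntegrableOn f s μ) (hg : IntegrableOn g t ν)
    (hK : IntegrableOn (Function.uncurry K) (s ×ˢ t) (μ.prod ν))
    (hle : ∀ x ∈ s, ∀ y ∈ t, f x * g y ≤ K x y) :
    (∫ x in s, f x ∂μ) * ∫ y in t, g y ∂ν ≤ ∫ x in s, ∫ y in t, K x y ∂ν ∂μ := by
  rw [← setIntegral_prod_mul]
  exact (setIntegral_mono_on (integrableOn_mul_prod hf hg) hK (hs.prod ht)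
    fun z hz => hle z.1 hz.1 z.2 hz.2).trans_eq (setIntegral_prod _ hK)

theorem integrableOn_prod_of_le_mul (hs : MeasurableSet s) (ht : MeasurableSet t)
    (hf : IntegrableOn f s μ) (hg : IntegrableOn g t ν) (hmeas : Measurable (Function.uncurry K))
    (hK : ∀ x ∈ s, ∀ y ∈ t, 0 ≤ K x y) (hle : ∀ x ∈ s, ∀ y ∈ t, K x y ≤ f x * g y) :
    IntegrableOn (Function.uncurry K) (s ×ˢ t) (μ.prod ν) := by
  refine (integrableOn_mul_prod hf hg).mono' hmeas.aestronglyMeasurable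
    (ae_restrict_of_forall_mem (hs.prod ht) fun z hz => ?_)
  rw [Function.uncurry, norm_of_nonneg (hK z.1 hz.1 z.2 hz.2)]
  exact hle z.1 hz.1 z.2 hz.2

end

theorem intervalIntegral_intervalIntegral_eq_setIntegral (F : ℝ → ℝ → ℝ) {l1 l2 l3 : ℝ}
    (h12 : l2 ≤ l1) (h23 : l3 ≤ l2) :
    ∫ n2 in l3..l2, ∫ n1 in l2..l1, F n2 n1 =
      ∫ w in Set.Ioo 0 (l2 - l3), ∫ u in Set.Ioo 0 (l1 - l2), F (w + l3) (l1 - u) := by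
  have hinner (n2 : ℝ) : ∫ u in Set.Ioo 0 (l1 - l2), F n2 (l1 - u) = ∫ n1 in l2..l1, F n2 n1 := by
    rw [← integral_Ioc_eq_integral_Ioo, ← intervalIntegral.integral_of_le (by linarith),
      intervalIntegral.integral_comp_sub_left (F n2) l1, sub_sub_cancel, sub_zero]
  simp only [hinner]
  rw [← integral_Ioc_eq_integral_Ioo, ← intervalIntegral.integral_of_le (by linarith),
    intervalIntegral.integral_comp_add_right (fun n2 => ∫ n1 in l2..l1, F n2 n1) l3,
    zero_add, sub_add_cancel]

/-! ### The integral kernel in root coordinates -/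

/-- The combination of the two rank-one kernels in the integrand of `EkA2`, in root coordinates
and stripped of constants and exponentials; `y / 2` is the product of their arguments. -/
noncomputable def rankOneBracket (k a b y w u : ℝ) : ℝ :=
  (a - u) * (a + b - w) * betaLaplace k (k - 1) 2 (y / 2) +
    u * (b - w) * betaLaplace (k - 1) k 2 (y / 2)

/-- The integrand of `EkA2` after the substitution `u = l1 - n1`, `w = n2 - l3`, stripped of
constants and of the exponential `exp (l1 * p - l3 * q)`; here `a = l1 - l2`, `b = l2 - l3`,
`p = x2 - x3` and `q = x3 - x1`. -/
noncomputable def rootKernel (k a b p q w u : ℝ) : ℝ :=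
  expBetaWeight k (k - 1) b q w * expBetaWeight (k - 1) (k - 1) a p u *
    (a + b - u) ^ k * (a + b - w) ^ (k - 1) *
    rankOneBracket k a b ((p + q) * (a + b - u - w)) w u

/-- The common polynomial decay of the two sides of the estimate, in root coordinates. -/
noncomputable def rootDecay (k a b p q : ℝ) : ℝ :=
  (1 + a * p) ^ (-(k + 1)) * (1 + b * q) ^ (-(k + 1)) * (1 + (a + b) * (p + q)) ^ (-k)

theorem rootDecay_nonneg {k a b p q : ℝ} (ha : 0 ≤ a) (hb : 0 ≤ b) (hp : 0 ≤ p) (hq : 0 ≤ q) :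
    0 ≤ rootDecay k a b p q := by
  unfold rootDecay
  positivity

theorem rootDecay_eq_inv {k a b p q : ℝ} (ha : 0 ≤ a) (hb : 0 ≤ b) (hp : 0 ≤ p) (hq : 0 ≤ q) :
    rootDecay k a b p q =
      ((1 + a * p) ^ (k + 1) * (1 + b * q) ^ (k + 1) * (1 + (a + b) * (p + q)) ^ k)⁻¹ := by
  rw [rootDecay, rpow_neg (by positivity), rpow_neg (by positivity), rpow_neg (by positivity),
    mul_inv, mul_inv]

theorem measurable_uncurry_rootKernel (k a b p q : ℝ) :
    Measurable (Function.uncurry (rootKernel k a b p q)) := by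
  have hweight (A B c r : ℝ) := measurable_expBetaWeight A B c r
  have hlaplace (A B : ℝ) := measurable_betaLaplace A B 2
  simp only [Function.uncurry_def, rootKernel, rankOneBracket]
  fun_prop

section

open Set

variable {k a b p q u w : ℝ}

theorem one_add_mul_add_le {v : ℝ} (hp : 0 ≤ p) (hq : 0 ≤ q) (hu : 0 ≤ u) (hw : 0 ≤ w)
    (hv : 0 ≤ v) :
    1 + p * (u + v) ≤ (1 + (p + q) * v) * ((1 + p * u) * (1 + q * w)) := by
  calc 1 + p * (u + v) ≤ (1 + p * v) * (1 + p * u) := by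
        have : 0 ≤ p * v * (p * u) := by positivity
        linarith
    _ ≤ (1 + (p + q) * v) * ((1 + p * u) * (1 + q * w)) := by
        have hpq : p * v ≤ (p + q) * v := by gcongr; linarith
        have hqw : 1 + p * u ≤ (1 + p * u) * (1 + q * w) :=
          le_mul_of_one_le_right (by positivity) (le_add_of_nonneg_right (by positivity))
        gcongr

theorem rankOneBracket_nonneg {y : ℝ} (hu : u ∈ Icc 0 a) (hw : w ∈ Icc 0 b) :
    0 ≤ rankOneBracket k a b y w u := by
  have hau := sub_nonneg.2 hu.2
  have hbw := sub_nonneg.2 hw.2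
  have habw : 0 ≤ a + b - w := by linarith [hu.1]
  exact add_nonneg (mul_nonneg (mul_nonneg hau habw) betaLaplace_nonneg)
    (mul_nonneg (mul_nonneg hu.1 hbw) betaLaplace_nonneg)

theorem rootKernel_nonneg (hu : u ∈ Ioo 0 a) (hw : w ∈ Ioo 0 b) :
    0 ≤ rootKernel k a b p q w u := by
  have : 0 ≤ a + b - u := by linarith [hu.2, hw.1, hw.2]
  have : 0 ≤ a + b - w := by linarith [hw.2, hu.1, hu.2]
  have := expBetaWeight_pos (A := k - 1) (B := k - 1) (p := p) hu
  have := expBetaWeight_pos (A := k) (B := k - 1) (p := q) hw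
  refine mul_nonneg (by positivity) ?_
  exact rankOneBracket_nonneg (Ioo_subset_Icc_self hu) (Ioo_subset_Icc_self hw)

theorem one_add_mul_le_mul (hp : 0 ≤ p) (hq : 0 ≤ q) (hu : u ∈ Ioo 0 a) (hw : w ∈ Ioo 0 b) :
    1 + a * p ≤ (1 + (p + q) * (a + b - u - w)) * ((1 + p * u) * (1 + q * w)) := by
  obtain ⟨hu0, hua⟩ := hu
  obtain ⟨hw0, hwb⟩ := hw
  have h := one_add_mul_add_le hp hq hu0.le hw0.le (by linarith : 0 ≤ a + b - u - w)
  refine le_trans ?_ h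
  rw [mul_comm a p]
  gcongr
  linarith

theorem sub_mul_one_add_mul_le (hp : 0 ≤ p) (hq : 0 ≤ q) (hab : a ≤ b)
    (hu : u ∈ Ioo 0 a) (hw : w ∈ Ioo 0 b) :
    (a + b - w) * (1 + (a + b) * (p + q)) ≤
      3 * (a + b) * ((1 + (p + q) * (a + b - u - w)) * ((1 + p * u) * (1 + q * w))) := by
  obtain ⟨hu0, hua⟩ := hu
  obtain ⟨hw0, hwb⟩ := hw
  have hv0 : 0 ≤ a + b - u - w := by linarith
  have hP := one_add_mul_add_le hp hq hu0.le hw0.le hv0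
  have hQ := one_add_mul_add_le hq hp hw0.le hu0.le hv0
  rw [add_comm q p, mul_comm (1 + q * w)] at hQ
  set M := (1 + (p + q) * (a + b - u - w)) * ((1 + p * u) * (1 + q * w))
  rw [show u + (a + b - u - w) = a + b - w by ring] at hP
  have hQM : q * (a + b) ≤ 2 * M := by
    have : q * (a + b) ≤ q * (2 * (a + b - u)) := by gcongr; linarith
    linarith
  have hQ0 : 0 ≤ q * (a + b) := mul_nonneg hq (by linarith)
  calc (a + b - w) * (1 + (a + b) * (p + q))
      = (a + b - w) + (a + b) * (p * (a + b - w)) + (a + b - w) * (q * (a + b)) := by ring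
    _ ≤ (a + b) + (a + b) * (p * (a + b - w)) + (a + b) * (2 * M) := by
        gcongr <;> linarith
    _ = (a + b) * (1 + p * (a + b - w)) + 2 * (a + b) * M := by ring
    _ ≤ 3 * (a + b) * M := by
        nlinarith

theorem sub_rpow_mul_rpow_neg_le (hk : 0 ≤ k) (hp : 0 ≤ p) (hq : 0 ≤ q) (hab : a ≤ b)
    (hu : u ∈ Ioo 0 a) (hw : w ∈ Ioo 0 b) :
    (a + b - w) ^ k * (1 + (p + q) * (a + b - u - w)) ^ (-k) ≤
      3 ^ k * (a + b) ^ k * (1 + (a + b) * (p + q)) ^ (-k) * ((1 + p * u) * (1 + q * w)) ^ k := by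
  have hbound := sub_mul_one_add_mul_le hp hq hab hu hw
  obtain ⟨hu0, hua⟩ := hu
  obtain ⟨hw0, hwb⟩ := hw
  have : 0 < a + b := by linarith
  have : 0 < a + b - w := by linarith
  have : 0 < a + b - u - w := by linarith
  have hpow := rpow_le_rpow (by positivity) hbound hk
  rw [mul_rpow (by positivity) (by positivity), mul_rpow (by positivity) (by positivity),
    mul_rpow (by positivity) (by positivity), mul_rpow (by positivity) (by positivity)] at hpow
  rw [rpow_neg (by positivity), rpow_neg (by positivity), ← div_eq_mul_inv,
    div_le_iff₀ (by positivity), ← mul_le_mul_iff_left₀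
      (by positivity : 0 < (1 + (a + b) * (p + q)) ^ k)]
  refine hpow.trans_eq ?_
  field_simp

theorem sub_mul_inv_add_le (hp : 0 ≤ p) (hq : 0 ≤ q) (hu : u ∈ Ioo 0 a) (hw : w ∈ Ioo 0 b) :
    (a - u) * (1 + (p + q) * (a + b - u - w))⁻¹ + u ≤
      (1 + p * u) * (1 + q * w) * ((a - u) * (1 + a * p)⁻¹ + u) := by
  have hT := one_add_mul_le_mul hp hq hu hw
  obtain ⟨hu0, hua⟩ := hu
  obtain ⟨hw0, hwb⟩ := hw
  have ha : 0 < a := hu0.trans hua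
  have hau := sub_pos.2 hua
  have : 0 < a + b - u - w := by linarith
  have hR : 1 ≤ (1 + p * u) * (1 + q * w) :=
    one_le_mul_of_one_le_of_one_le (le_add_of_nonneg_right (by positivity))
      (le_add_of_nonneg_right (by positivity))
  have hinv : (1 + (p + q) * (a + b - u - w))⁻¹ ≤
      (1 + p * u) * (1 + q * w) * (1 + a * p)⁻¹ := by
    rwa [← div_eq_mul_inv, inv_le_iff_one_le_mul₀ (by positivity), div_mul_eq_mul_div,
      one_le_div (by positivity), mul_comm ((1 + p * u) * (1 + q * w))]
  calc (a - u) * (1 + (p + q) * (a + b - u - w))⁻¹ + u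
      ≤ (a - u) * ((1 + p * u) * (1 + q * w) * (1 + a * p)⁻¹) + (1 + p * u) * (1 + q * w) * u :=
        add_le_add (mul_le_mul_of_nonneg_left hinv hau.le) (le_mul_of_one_le_left hu0.le hR)
    _ = (1 + p * u) * (1 + q * w) * ((a - u) * (1 + a * p)⁻¹ + u) := by ring

theorem exists_betaLaplace_two_half_le {A B : ℝ} (hA : -1 < A) (hB : -1 < B) :
    ∃ C > 0, ∀ y, 0 ≤ y → betaLaplace A B 2 (y / 2) ≤ C * (1 + y) ^ (-(A + 1)) := by
  obtain ⟨C, hC, h⟩ := exists_betaLaplace_le hA hB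
  refine ⟨C * 2 ^ (A + B + 1), by positivity, fun y hy => ?_⟩
  simpa only [mul_div_cancel₀ y (two_ne_zero (α := ℝ)), mul_assoc] using
    h 2 (y / 2) two_pos (by positivity)

theorem exists_rankOneBracket_le (hk : 0 < k) :
    ∃ C > 0, ∀ {a b y w u : ℝ}, 0 ≤ y → u ∈ Icc 0 a → w ∈ Icc 0 b →
      rankOneBracket k a b y w u ≤
        C * ((a + b - w) * (1 + y) ^ (-k) * ((a - u) * (1 + y)⁻¹ + u)) := by
  obtain ⟨C₁, hC₁, h₁⟩ := exists_betaLaplace_two_half_le (A := k) (B := k - 1)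
    (by linarith) (by linarith)
  obtain ⟨C₂, hC₂, h₂⟩ := exists_betaLaplace_two_half_le (A := k - 1) (B := k)
    (by linarith) (by linarith)
  refine ⟨C₁ + C₂, by positivity, fun {a b y w u} hy ⟨hu0, hua⟩ ⟨_, hwb⟩ => ?_⟩
  have hpow : (1 + y) ^ (-(k + 1)) = (1 + y) ^ (-k) * (1 + y)⁻¹ := by
    rw [neg_add, ← sub_eq_add_neg, rpow_sub_one (by positivity), div_eq_mul_inv]
  have h₁ := h₁ y hy
  have h₂ := h₂ y hy
  have hau := sub_nonneg.2 hua
  have habw : 0 ≤ a + b - w := by linarith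
  rw [hpow] at h₁
  rw [sub_add_cancel] at h₂
  calc rankOneBracket k a b y w u
      ≤ (a - u) * (a + b - w) * ((C₁ + C₂) * ((1 + y) ^ (-k) * (1 + y)⁻¹)) +
          u * (a + b - w) * ((C₁ + C₂) * (1 + y) ^ (-k)) := by
        unfold rankOneBracket
        gcongr
        · exact h₁.trans (by gcongr; linarith)
        · exact betaLaplace_nonneg
        · linarith
        · exact h₂.trans (by gcongr; linarith)
    _ = (C₁ + C₂) * ((a + b - w) * (1 + y) ^ (-k) * ((a - u) * (1 + y)⁻¹ + u)) := by ring

theorem exists_sub_rpow_mul_rankOneBracket_le (hk : 0 < k) :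
    ∃ C > 0, ∀ {a b p q w u : ℝ}, 0 ≤ p → 0 ≤ q → a ≤ b → u ∈ Ioo 0 a → w ∈ Ioo 0 b →
      (a + b - w) ^ (k - 1) * rankOneBracket k a b ((p + q) * (a + b - u - w)) w u ≤
        C * ((a + b) ^ k * (1 + (a + b) * (p + q)) ^ (-k) *
          ((1 + p * u) * (1 + q * w)) ^ (k + 1) * ((a - u) * (1 + a * p)⁻¹ + u)) := by
  obtain ⟨C, hC, hbracket⟩ := exists_rankOneBracket_le hk
  refine ⟨C * 3 ^ k, by positivity, fun {a b p q w u} hp hq hab hu hw => ?_⟩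
  have hpow := sub_rpow_mul_rpow_neg_le hk.le hp hq hab hu hw
  have hsum := sub_mul_inv_add_le hp hq hu hw
  have hu0 := hu.1
  have hw0 := hw.1
  have : 0 < a - u := sub_pos.2 hu.2
  have : 0 < a + b := by linarith [hw.2]
  have : 0 < a + b - u - w := by linarith [hw.2]
  have hs : 0 < a + b - w := by linarith
  have hbracket := hbracket (by positivity : 0 ≤ (p + q) * (a + b - u - w))
    (Ioo_subset_Icc_self hu) (Ioo_subset_Icc_self hw)
  set y := (p + q) * (a + b - u - w)
  set R := (1 + p * u) * (1 + q * w)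
  have hy : 0 ≤ y := by positivity
  have hR : 0 < R := by positivity
  calc (a + b - w) ^ (k - 1) * rankOneBracket k a b y w u
      ≤ (a + b - w) ^ (k - 1) *
          (C * ((a + b - w) * (1 + y) ^ (-k) * ((a - u) * (1 + y)⁻¹ + u))) := by gcongr
    _ = C * ((a + b - w) ^ k * (1 + y) ^ (-k)) * ((a - u) * (1 + y)⁻¹ + u) := by
        rw [rpow_sub_one hs.ne']
        field_simp
    _ ≤ C * (3 ^ k * (a + b) ^ k * (1 + (a + b) * (p + q)) ^ (-k) * R ^ k) *
          (R * ((a - u) * (1 + a * p)⁻¹ + u)) := by gcongr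
    _ = _ := by
        rw [rpow_add_one hR.ne']
        ring

theorem rpow_mul_expBetaWeight_mul_le {A B A' B' m : ℝ} (hm : 0 ≤ m) (hp : 0 ≤ p) (hq : 0 ≤ q)
    (hu : u ∈ Ioo 0 a) (hw : w ∈ Ioo 0 b) :
    ((1 + p * u) * (1 + q * w)) ^ m * (expBetaWeight A B b q w * expBetaWeight A' B' a p u) ≤
      ((2 * m) ^ m * exp (1 / 2)) ^ 2 *
        (expBetaWeight A B b (q / 2) w * expBetaWeight A' B' a (p / 2) u) := by
  have hu0 := hu.1
  have hw0 := hw.1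
  have hWu := expBetaWeight_pos (A := A') (B := B') (p := p) hu
  have hWw := expBetaWeight_pos (A := A) (B := B) (p := q / 2) hw
  have h := mul_le_mul (one_add_rpow_mul_expBetaWeight_le (A := A) (B := B) hm hq hw)
    (one_add_rpow_mul_expBetaWeight_le (A := A') (B := B') hm hp hu) (by positivity)
    (by positivity)
  rw [mul_rpow (by positivity) (by positivity)]
  linarith

theorem expBetaWeight_mul_sub_mul_add (hu : u ∈ Ioo 0 a) (c : ℝ) :
    expBetaWeight (k - 1) (k - 1) a p u * ((a - u) * c + u) =
      c * expBetaWeight (k - 1) k a p u + expBetaWeight k (k - 1) a p u := by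
  have hself := expBetaWeight_mul_self (A := k - 1) (B := k - 1) (a := a) (p := p) hu.1
  have hsub := expBetaWeight_mul_sub (A := k - 1) (B := k - 1) (p := p) hu.2
  rw [sub_add_cancel] at hself hsub
  rw [← hself, ← hsub]
  ring

theorem exists_rootKernel_le (hk : 0 < k) :
    ∃ C > 0, ∀ {a b p q w u : ℝ}, 0 ≤ p → 0 ≤ q → a ≤ b → w ∈ Ioo 0 b → u ∈ Ioo 0 a →
      rootKernel k a b p q w u ≤
        C * ((a + b) ^ (2 * k) * (1 + (a + b) * (p + q)) ^ (-k)) *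
          expBetaWeight k (k - 1) b (q / 2) w *
          ((1 + a * p)⁻¹ * expBetaWeight (k - 1) k a (p / 2) u +
            expBetaWeight k (k - 1) a (p / 2) u) := by
  obtain ⟨C, hC, hbracket⟩ := exists_sub_rpow_mul_rankOneBracket_le hk
  refine ⟨C * ((2 * (k + 1)) ^ (k + 1) * exp (1 / 2)) ^ 2, by positivity,
    fun {a b p q w u} hp hq hab hw hu => ?_⟩
  have hbracket := hbracket hp hq hab hu hw
  have habsorb := rpow_mul_expBetaWeight_mul_le (A := k) (B := k - 1) (A' := k - 1) (B' := k - 1)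
    (by linarith : 0 ≤ k + 1) hp hq hu hw
  have hW : 0 < expBetaWeight k (k - 1) b q w * expBetaWeight (k - 1) (k - 1) a p u :=
    mul_pos (expBetaWeight_pos hw) (expBetaWeight_pos hu)
  have hu0 := hu.1
  have hw0 := hw.1
  have : 0 < a := hu.1.trans hu.2
  have : 0 < a - u := sub_pos.2 hu.2
  have : 0 < a + b - u := by linarith
  have hab0 : 0 < a + b := by linarith
  have hab2 : (a + b) ^ (2 * k) = (a + b) ^ k * (a + b) ^ k := by rw [two_mul, rpow_add hab0]
  rw [mul_assoc (_ * _), ← expBetaWeight_mul_sub_mul_add hu, hab2]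
  set R := (1 + p * u) * (1 + q * w)
  set S := (a - u) * (1 + a * p)⁻¹ + u
  set D := (1 + (a + b) * (p + q)) ^ (-k)
  set M := (2 * (k + 1)) ^ (k + 1) * exp (1 / 2)
  set W := expBetaWeight k (k - 1) b q w * expBetaWeight (k - 1) (k - 1) a p u with hW_def
  set W' := expBetaWeight k (k - 1) b (q / 2) w * expBetaWeight (k - 1) (k - 1) a (p / 2) u
    with hW'_def
  have : 0 < D := by positivity
  have : 0 < S := by positivity
  calc rootKernel k a b p q w u
      = (a + b - u) ^ k * W *
          ((a + b - w) ^ (k - 1) * rankOneBracket k a b ((p + q) * (a + b - u - w)) w u) := by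
        rw [rootKernel, hW_def]; ring
    _ ≤ (a + b - u) ^ k * W * (C * ((a + b) ^ k * D * R ^ (k + 1) * S)) := by gcongr
    _ = C * ((a + b - u) ^ k * (a + b) ^ k * D) * (R ^ (k + 1) * W) * S := by ring
    _ ≤ C * ((a + b) ^ k * (a + b) ^ k * D) * (M ^ 2 * W') * S := by
        gcongr
        linarith
    _ = _ := by rw [hW'_def]; ring

theorem exists_le_rankOneBracket (hk : 0 < k) :
    ∃ c > 0, ∀ {a b y w u : ℝ}, 0 ≤ y → u ∈ Icc 0 a → w ∈ Icc 0 b →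
      c * (u * (b - w) * (1 + y) ^ (-k)) ≤ rankOneBracket k a b y w u := by
  obtain ⟨c, hc, h⟩ := exists_le_betaLaplace (A := k - 1) (B := k) (by linarith) (by linarith)
  refine ⟨c * 2 ^ (k - 1 + k + 1), by positivity, fun {a b y w u} hy ⟨hu0, hua⟩ ⟨_, hwb⟩ => ?_⟩
  have h := h 2 (y / 2) two_pos (by positivity)
  rw [mul_div_cancel₀ y (two_ne_zero (α := ℝ)), sub_add_cancel] at h
  have hau := sub_nonneg.2 hua
  have : 0 ≤ b - w := sub_nonneg.2 hwb
  calc c * 2 ^ (k - 1 + k + 1) * (u * (b - w) * (1 + y) ^ (-k))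
      = u * (b - w) * (c * (2 ^ (k - 1 + k + 1) * (1 + y) ^ (-k))) := by ring
    _ ≤ u * (b - w) * betaLaplace (k - 1) k 2 (y / 2) := by gcongr
    _ ≤ rankOneBracket k a b y w u :=
        le_add_of_nonneg_left
          (mul_nonneg (mul_nonneg hau (by linarith)) betaLaplace_nonneg)

theorem sub_rpow_le_mul_sub_rpow (hk : 0 ≤ k) (hab : a ≤ b) (hu : u ∈ Ioo 0 a)
    (hw : w ∈ Ioo 0 b) :
    b ^ (k - 1) / 2 * (b - w) ^ k ≤ (a + b - u) ^ k * (a + b - w) ^ (k - 1) := by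
  obtain ⟨hu0, hua⟩ := hu
  obtain ⟨hw0, hwb⟩ := hw
  have hb : 0 < b := hw0.trans hwb
  have : 0 < b - w := sub_pos.2 hwb
  have hs : 0 < a + b - w := by linarith
  have : 0 < a + b - u := by linarith
  calc b ^ (k - 1) / 2 * (b - w) ^ k = b ^ k * ((b - w) ^ k / (2 * b)) := by
        rw [rpow_sub_one hb.ne']
        field_simp
    _ ≤ (a + b - u) ^ k * ((a + b - w) ^ k / (a + b - w)) := by
        gcongr <;> linarith
    _ = (a + b - u) ^ k * (a + b - w) ^ (k - 1) := by rw [rpow_sub_one hs.ne']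

theorem exists_le_rootKernel (hk : 0 < k) :
    ∃ c > 0, ∀ {a b p q w u : ℝ}, 0 ≤ p → 0 ≤ q → a ≤ b → w ∈ Ioo 0 b → u ∈ Ioo 0 a →
      c * (b ^ (k - 1) * (1 + (a + b) * (p + q)) ^ (-k)) * expBetaWeight k (2 * k) b q w *
        expBetaWeight k (k - 1) a p u ≤ rootKernel k a b p q w u := by
  obtain ⟨c, hc, hbracket⟩ := exists_le_rankOneBracket hk
  refine ⟨c / 2, by positivity, fun {a b p q w u} hp hq hab hw hu => ?_⟩
  have hpow := sub_rpow_le_mul_sub_rpow hk.le hab hu hw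
  have hWw := expBetaWeight_pos (A := k) (B := k - 1) (p := q) hw
  have hWu := expBetaWeight_pos (A := k - 1) (B := k - 1) (p := p) hu
  have hWw_mul : expBetaWeight k (k - 1) b q w * ((b - w) ^ k * (b - w)) =
      expBetaWeight k (2 * k) b q w := by
    rw [← rpow_add_one (sub_pos.2 hw.2).ne', expBetaWeight_mul_sub_rpow hw.2]
    ring_nf
  have hWu_mul := expBetaWeight_mul_self (A := k - 1) (B := k - 1) (a := a) (p := p) hu.1
  rw [sub_add_cancel] at hWu_mul
  have hu0 := hu.1
  have hw0 := hw.1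
  have : 0 < a := hu.1.trans hu.2
  have : 0 < b := hw.1.trans hw.2
  have : 0 < b - w := sub_pos.2 hw.2
  have : 0 < a + b - u - w := by linarith [hu.2]
  have : 0 < a + b - u := by linarith
  have : 0 < a + b - w := by linarith
  set D := (1 + (a + b) * (p + q)) ^ (-k)
  have : 0 < D := by positivity
  have hD : D ≤ (1 + (p + q) * (a + b - u - w)) ^ (-k) := by
    refine rpow_le_rpow_of_nonpos (by positivity) ?_ (by linarith)
    rw [mul_comm (a + b)]
    gcongr
    linarith
  have hbracket := hbracket (y := (p + q) * (a + b - u - w)) (by positivity)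
    (Ioo_subset_Icc_self hu) (Ioo_subset_Icc_self hw)
  calc c / 2 * (b ^ (k - 1) * D) * expBetaWeight k (2 * k) b q w * expBetaWeight k (k - 1) a p u
      = expBetaWeight k (k - 1) b q w * expBetaWeight (k - 1) (k - 1) a p u *
          (b ^ (k - 1) / 2 * (b - w) ^ k) * (c * (u * (b - w) * D)) := by
        rw [← hWw_mul, ← hWu_mul]
        ring
    _ ≤ expBetaWeight k (k - 1) b q w * expBetaWeight (k - 1) (k - 1) a p u *
          ((a + b - u) ^ k * (a + b - w) ^ (k - 1)) *
          (c * (u * (b - w) * (1 + (p + q) * (a + b - u - w)) ^ (-k))) := by gcongr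
    _ ≤ expBetaWeight k (k - 1) b q w * expBetaWeight (k - 1) (k - 1) a p u *
          ((a + b - u) ^ k * (a + b - w) ^ (k - 1)) *
          rankOneBracket k a b ((p + q) * (a + b - u - w)) w u := by gcongr
    _ = rootKernel k a b p q w u := by rw [rootKernel]; ring

theorem exists_betaLaplace_half_le {A B : ℝ} (hA : -1 < A) (hB : -1 < B) :
    ∃ C > 0, ∀ a p, 0 < a → 0 ≤ p →
      betaLaplace A B a (p / 2) ≤ C * (a ^ (A + B + 1) * (1 + a * p) ^ (-(A + 1))) := by
  obtain ⟨C, hC, h⟩ := exists_betaLaplace_le hA hB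
  refine ⟨C * 2 ^ (A + 1), by positivity, fun a p ha hp => ?_⟩
  have hhalf := one_add_half_rpow_neg_le (y := a * p) (m := A + 1) (by positivity) (by linarith)
  calc betaLaplace A B a (p / 2) ≤ C * (a ^ (A + B + 1) * (1 + a * p / 2) ^ (-(A + 1))) := by
        rw [mul_div_assoc]
        exact h a (p / 2) ha (by positivity)
    _ ≤ C * (a ^ (A + B + 1) * (2 ^ (A + 1) * (1 + a * p) ^ (-(A + 1)))) := by gcongr
    _ = _ := by ring

theorem exists_inv_mul_betaLaplace_add_le (hk : 0 < k) :
    ∃ C > 0, ∀ a p, 0 < a → 0 ≤ p →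
      (1 + a * p)⁻¹ * betaLaplace (k - 1) k a (p / 2) + betaLaplace k (k - 1) a (p / 2) ≤
        C * (a ^ (2 * k) * (1 + a * p) ^ (-(k + 1))) := by
  obtain ⟨C₁, hC₁, h₁⟩ := exists_betaLaplace_half_le (A := k - 1) (B := k)
    (by linarith) (by linarith)
  obtain ⟨C₂, hC₂, h₂⟩ := exists_betaLaplace_half_le (A := k) (B := k - 1)
    (by linarith) (by linarith)
  refine ⟨C₁ + C₂, by positivity, fun a p ha hp => ?_⟩
  have h₁ := h₁ a p ha hp
  have h₂ := h₂ a p ha hp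
  rw [show k - 1 + k + 1 = 2 * k by ring, show -(k - 1 + 1) = -(k + 1) + 1 by ring,
    rpow_add_one (by positivity)] at h₁
  rw [show k + (k - 1) + 1 = 2 * k by ring] at h₂
  calc _ ≤ (1 + a * p)⁻¹ * (C₁ * (a ^ (2 * k) * ((1 + a * p) ^ (-(k + 1)) * (1 + a * p)))) +
        C₂ * (a ^ (2 * k) * (1 + a * p) ^ (-(k + 1))) := by gcongr
    _ = (C₁ + C₂) * (a ^ (2 * k) * (1 + a * p) ^ (-(k + 1))) := by field_simp

theorem exists_integral_rootKernel_le (hk : 0 < k) :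
    ∃ C > 0, ∀ {a b p q : ℝ}, 0 ≤ p → 0 ≤ q → 0 < a → a ≤ b →
      ∫ w in Ioo 0 b, ∫ u in Ioo 0 a, rootKernel k a b p q w u ≤
        C * ((a * (a + b) * b) ^ (2 * k) * rootDecay k a b p q) := by
  have hk1 : -1 < k - 1 := by linarith
  have hk0 : -1 < k := by linarith
  obtain ⟨C, hC, hkernel⟩ := exists_rootKernel_le hk
  obtain ⟨C₁, hC₁, hw_integral⟩ := exists_betaLaplace_half_le hk0 hk1
  obtain ⟨C₂, hC₂, hu_integral⟩ := exists_inv_mul_betaLaplace_add_le hk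
  refine ⟨C * C₁ * C₂, by positivity, fun {a b p q} hp hq ha hab => ?_⟩
  have hb : 0 < b := ha.trans_le hab
  have hfw := integrableOn_expBetaWeight (p := q / 2) hk0 hk1 hb
  have hfu := (integrableOn_expBetaWeight (p := p / 2) hk1 hk0 ha).const_mul (1 + a * p)⁻¹
  have hfu' := integrableOn_expBetaWeight (p := p / 2) hk0 hk1 ha
  have hw_integral := hw_integral b q hb hq
  have hu_integral := hu_integral a p ha hp
  rw [show k + (k - 1) + 1 = 2 * k by ring] at hw_integral
  set K := C * ((a + b) ^ (2 * k) * (1 + (a + b) * (p + q)) ^ (-k)) with hK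
  calc ∫ w in Ioo 0 b, ∫ u in Ioo 0 a, rootKernel k a b p q w u
      ≤ (∫ w in Ioo 0 b, K * expBetaWeight k (k - 1) b (q / 2) w) *
          ∫ u in Ioo 0 a, ((1 + a * p)⁻¹ * expBetaWeight (k - 1) k a (p / 2) u +
            expBetaWeight k (k - 1) a (p / 2) u) :=
        setIntegral_setIntegral_le_mul measurableSet_Ioo measurableSet_Ioo (hfw.const_mul K)
          (hfu.add hfu') (fun w hw u hu => rootKernel_nonneg hu hw)
          (fun w hw u hu => hkernel hp hq hab hw hu)
    _ = K * betaLaplace k (k - 1) b (q / 2) *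
          ((1 + a * p)⁻¹ * betaLaplace (k - 1) k a (p / 2) + betaLaplace k (k - 1) a (p / 2)) := by
        rw [integral_add hfu hfu', integral_const_mul, integral_const_mul]
        rfl
    _ ≤ K * (C₁ * (b ^ (2 * k) * (1 + b * q) ^ (-(k + 1)))) *
          (C₂ * (a ^ (2 * k) * (1 + a * p) ^ (-(k + 1)))) := by
        have := betaLaplace_nonneg (A := k) (B := k - 1) (a := b) (p := q / 2)
        have := betaLaplace_nonneg (A := k - 1) (B := k) (a := a) (p := p / 2)
        have := betaLaplace_nonneg (A := k) (B := k - 1) (a := a) (p := p / 2)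
        gcongr
    _ = C * C₁ * C₂ * ((a * (a + b) * b) ^ (2 * k) * rootDecay k a b p q) := by
        rw [hK, rootDecay, mul_rpow (by positivity) hb.le, mul_rpow ha.le (by positivity)]
        ring

theorem integrableOn_rootKernel (hk : 0 < k) (hp : 0 ≤ p) (hq : 0 ≤ q) (ha : 0 < a)
    (hab : a ≤ b) :
    IntegrableOn (Function.uncurry (rootKernel k a b p q)) (Ioo 0 b ×ˢ Ioo 0 a) := by
  have hk1 : -1 < k - 1 := by linarith
  have hk0 : -1 < k := by linarith
  obtain ⟨C, _, hkernel⟩ := exists_rootKernel_le hk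
  exact integrableOn_prod_of_le_mul measurableSet_Ioo measurableSet_Ioo
    ((integrableOn_expBetaWeight hk0 hk1 (ha.trans_le hab)).const_mul _)
    (((integrableOn_expBetaWeight hk1 hk0 ha).const_mul _).add
      (integrableOn_expBetaWeight hk0 hk1 ha))
    (measurable_uncurry_rootKernel k a b p q) (fun w hw u hu => rootKernel_nonneg hu hw)
    (fun w hw u hu => hkernel hp hq hab hw hu)

theorem mul_add_mul_rpow_le (hk : 0 ≤ k) (ha : 0 < a) (hab : a ≤ b) :
    (a * (a + b) * b) ^ (2 * k) ≤ 2 ^ (2 * k) * (a ^ (2 * k) * b ^ (4 * k)) := by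
  have hb : 0 < b := ha.trans_le hab
  calc (a * (a + b) * b) ^ (2 * k) ≤ (2 * (a * b ^ 2)) ^ (2 * k) := by
        refine rpow_le_rpow (by positivity) ?_ (by positivity)
        have : a * b * (a + b) ≤ a * b * (b + b) := by gcongr
        linarith
    _ = 2 ^ (2 * k) * (a ^ (2 * k) * b ^ (4 * k)) := by
        rw [mul_rpow zero_le_two (by positivity), mul_rpow ha.le (by positivity),
          ← rpow_natCast_mul hb.le]
        ring_nf

theorem exists_le_integral_rootKernel (hk : 0 < k) :
    ∃ c > 0, ∀ {a b p q : ℝ}, 0 ≤ p → 0 ≤ q → 0 < a → a ≤ b →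
      c * ((a * (a + b) * b) ^ (2 * k) * rootDecay k a b p q) ≤
        ∫ w in Ioo 0 b, ∫ u in Ioo 0 a, rootKernel k a b p q w u := by
  have hk1 : -1 < k - 1 := by linarith
  have hk0 : -1 < k := by linarith
  have h2k : -1 < 2 * k := by linarith
  obtain ⟨c, hc, hkernel⟩ := exists_le_rootKernel hk
  obtain ⟨c₁, hc₁, hw_integral⟩ := exists_le_betaLaplace hk0 h2k
  obtain ⟨c₂, hc₂, hu_integral⟩ := exists_le_betaLaplace hk0 hk1
  refine ⟨c * c₁ * c₂ / 2 ^ (2 * k), by positivity, fun {a b p q} hp hq ha hab => ?_⟩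
  have hb : 0 < b := ha.trans_le hab
  have hw_integral := hw_integral b q hb hq
  have hu_integral := hu_integral a p ha hp
  rw [show k + (k - 1) + 1 = 2 * k by ring] at hu_integral
  have hb_pow : b ^ (4 * k) = b ^ (k - 1) * b ^ (k + 2 * k + 1) := by
    rw [← rpow_add hb]
    ring_nf
  set K := c * (b ^ (k - 1) * (1 + (a + b) * (p + q)) ^ (-k)) with hK
  calc c * c₁ * c₂ / 2 ^ (2 * k) * ((a * (a + b) * b) ^ (2 * k) * rootDecay k a b p q)
      ≤ c * c₁ * c₂ / 2 ^ (2 * k) *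
          (2 ^ (2 * k) * (a ^ (2 * k) * b ^ (4 * k)) * rootDecay k a b p q) := by
        have := rootDecay_nonneg (k := k) ha.le hb.le hp hq
        gcongr
        exact mul_add_mul_rpow_le hk.le ha hab
    _ = K * (c₁ * (b ^ (k + 2 * k + 1) * (1 + b * q) ^ (-(k + 1)))) *
          (c₂ * (a ^ (2 * k) * (1 + a * p) ^ (-(k + 1)))) := by
        rw [hK, hb_pow, rootDecay]
        field_simp
    _ ≤ K * betaLaplace k (2 * k) b q * betaLaplace k (k - 1) a p := by
        have := betaLaplace_nonneg (A := k) (B := 2 * k) (a := b) (p := q)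
        gcongr
    _ = (∫ w in Ioo 0 b, K * expBetaWeight k (2 * k) b q w) *
          ∫ u in Ioo 0 a, expBetaWeight k (k - 1) a p u := by
        rw [integral_const_mul]
        rfl
    _ ≤ ∫ w in Ioo 0 b, ∫ u in Ioo 0 a, rootKernel k a b p q w u :=
        mul_le_setIntegral_setIntegral measurableSet_Ioo measurableSet_Ioo
          ((integrableOn_expBetaWeight hk0 h2k hb).const_mul K)
          (integrableOn_expBetaWeight hk0 hk1 ha) (integrableOn_rootKernel hk hp hq ha hab)
          (fun w hw u hu => hkernel hp hq hab hw hu)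

end

/-! ### Reduction of the `A₂` kernel -/

theorem mul_add_mul_Erk1_eq_rankOneBracket (k a b x v w u : ℝ) :
    (a - u) * (a + b - w) * Erk1 k (-(x / 2)) v + u * (b - w) * Erk1 k (x / 2) v =
      Gamma (k + 1 / 2) / (√π * Gamma k) * exp (x * v / 2) * rankOneBracket k a b (x * v) w u := by
  rw [Erk1_neg_eq_betaLaplace, Erk1_eq_betaLaplace, div_mul_eq_mul_div x, rankOneBracket]
  ring

theorem Wk_mul_exp_eq (k p q : ℝ) {l1 l2 l3 w u : ℝ} (hw : w ∈ Set.Ioo 0 (l2 - l3))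
    (hu : u ∈ Set.Ioo 0 (l1 - l2)) :
    (l1 - u - l3) * w * Wk k l1 l2 l3 (l1 - u) (w + l3) * exp (-(p * u) - q * w) =
      expBetaWeight k (k - 1) (l2 - l3) q w * expBetaWeight (k - 1) (k - 1) (l1 - l2) p u *
        (l1 - u - l3) ^ k * (l1 - l3 - w) ^ (k - 1) := by
  obtain ⟨hw0, hwb⟩ := hw
  obtain ⟨hu0, hua⟩ := hu
  have hn1l3 : 0 < l1 - u - l3 := by linarith
  have hl1n2 : 0 ≤ l1 - l3 - w := by linarith
  have hn1l2 : 0 ≤ l1 - l2 - u := by linarith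
  have hl2n2 : 0 ≤ l2 - l3 - w := by linarith
  have hWk : Wk k l1 l2 l3 (l1 - u) (w + l3) =
      u ^ (k - 1) * (l1 - l3 - w) ^ (k - 1) * (l1 - l2 - u) ^ (k - 1) *
        (l2 - l3 - w) ^ (k - 1) * (l1 - u - l3) ^ (k - 1) * w ^ (k - 1) := by
    rw [← mul_rpow hu0.le hl1n2, ← mul_rpow (by positivity) hn1l2, ← mul_rpow (by positivity) hl2n2,
      ← mul_rpow (by positivity) hn1l3.le, ← mul_rpow (by positivity) hw0.le, Wk]
    ring_nf
  rw [hWk, exp_sub, exp_neg]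
  simp only [expBetaWeight, neg_mul, exp_neg, rpow_sub_one hn1l3.ne', rpow_sub_one hw0.ne']
  field_simp

/-- The integrand of `EkA2`, without its constant prefactor. -/
noncomputable def dunklIntegrand (k x1 x2 x3 l1 l2 l3 n2 n1 : ℝ) : ℝ :=
  ((n1 - l2) * (l1 - n2) * Erk1 k ((x1 - x2) / 2) (n1 - n2)
      + (l1 - n1) * (l2 - n2) * Erk1 k (-(x1 - x2) / 2) (n1 - n2))
    * ((n1 - l3) * (n2 - l3)) * exp ((x1 + x2 - 2 * x3) * (n1 + n2) / 2)
    * Wk k l1 l2 l3 n1 n2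

theorem dunklIntegrand_eq_rootKernel (k x1 x2 x3 : ℝ) {l1 l2 l3 w u : ℝ}
    (hw : w ∈ Set.Ioo 0 (l2 - l3)) (hu : u ∈ Set.Ioo 0 (l1 - l2)) :
    dunklIntegrand k x1 x2 x3 l1 l2 l3 (w + l3) (l1 - u) =
      Gamma (k + 1 / 2) / (√π * Gamma k) * exp (l1 * (x2 - x3) - l3 * (x3 - x1)) *
        rootKernel k (l1 - l2) (l2 - l3) (x2 - x3) (x3 - x1) w u := by
  have hW := Wk_mul_exp_eq k (x2 - x3) (x3 - x1) hw hu
  set c := Gamma (k + 1 / 2) / (√π * Gamma k)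
  set W := Wk k l1 l2 l3 (l1 - u) (w + l3)
  set v := l1 - u - (w + l3) with hv
  set B := rankOneBracket k (l1 - l2) (l2 - l3) ((x2 - x1) * v) w u with hB
  have hbracket : (l1 - u - l2) * (l1 - (w + l3)) * Erk1 k ((x1 - x2) / 2) v +
      (l1 - (l1 - u)) * (l2 - (w + l3)) * Erk1 k (-(x1 - x2) / 2) v =
        c * exp ((x2 - x1) * v / 2) * B := by
    rw [hB, ← mul_add_mul_Erk1_eq_rankOneBracket]
    ring_nf
  have hexp : exp ((x2 - x1) * v / 2) * exp ((x1 + x2 - 2 * x3) * (l1 - u + (w + l3)) / 2) =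
      exp (l1 * (x2 - x3) - l3 * (x3 - x1)) * exp (-((x2 - x3) * u) - (x3 - x1) * w) := by
    rw [← exp_add, ← exp_add, hv]
    ring_nf
  calc dunklIntegrand k x1 x2 x3 l1 l2 l3 (w + l3) (l1 - u)
      = c * exp ((x2 - x1) * v / 2) * B * ((l1 - u - l3) * w) *
          exp ((x1 + x2 - 2 * x3) * (l1 - u + (w + l3)) / 2) * W := by
        rw [dunklIntegrand, hbracket, add_sub_cancel_right]
    _ = c * (exp ((x2 - x1) * v / 2) * exp ((x1 + x2 - 2 * x3) * (l1 - u + (w + l3)) / 2)) *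
          ((l1 - u - l3) * w * W) * B := by ring
    _ = c * exp (l1 * (x2 - x3) - l3 * (x3 - x1)) *
          ((l1 - u - l3) * w * W * exp (-((x2 - x3) * u) - (x3 - x1) * w)) * B := by
        rw [hexp]
        ring
    _ = c * exp (l1 * (x2 - x3) - l3 * (x3 - x1)) *
          rootKernel k (l1 - l2) (l2 - l3) (x2 - x3) (x3 - x1) w u := by
        rw [hW, hB, hv, rootKernel]
        ring_nf

theorem EkA2_eq_integral_rootKernel (k x1 x2 x3 : ℝ) {l1 l2 l3 : ℝ} (h12 : l2 ≤ l1)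
    (h23 : l3 ≤ l2) :
    EkA2 k x1 x2 x3 l1 l2 l3 =
      3 * Gamma (3 * k) / Gamma k ^ 2 * (Gamma (k + 1 / 2) / (√π * Gamma k)) *
        exp (l1 * (x2 - x3) - l3 * (x3 - x1)) *
        ((∫ w in Set.Ioo 0 (l2 - l3), ∫ u in Set.Ioo 0 (l1 - l2),
          rootKernel k (l1 - l2) (l2 - l3) (x2 - x3) (x3 - x1) w u) /
            Vlam l1 l2 l3 ^ (2 * k)) := by
  calc EkA2 k x1 x2 x3 l1 l2 l3
      = 3 * Gamma (3 * k) / (Vlam l1 l2 l3 ^ (2 * k) * Gamma k ^ 2) *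
          ∫ n2 in l3..l2, ∫ n1 in l2..l1, dunklIntegrand k x1 x2 x3 l1 l2 l3 n2 n1 := rfl
    _ = 3 * Gamma (3 * k) / (Vlam l1 l2 l3 ^ (2 * k) * Gamma k ^ 2) *
          (Gamma (k + 1 / 2) / (√π * Gamma k) * exp (l1 * (x2 - x3) - l3 * (x3 - x1)) *
            ∫ w in Set.Ioo 0 (l2 - l3), ∫ u in Set.Ioo 0 (l1 - l2),
              rootKernel k (l1 - l2) (l2 - l3) (x2 - x3) (x3 - x1) w u) := by
        simp only [intervalIntegral_intervalIntegral_eq_setIntegral _ h12 h23,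
          ← integral_const_mul (Gamma (k + 1 / 2) / (√π * Gamma k) * _)]
        congr 1
        exact setIntegral_congr_fun measurableSet_Ioo fun w hw =>
          setIntegral_congr_fun measurableSet_Ioo fun u hu =>
            dunklIntegrand_eq_rootKernel k x1 x2 x3 hw hu
    _ = _ := by ring

theorem exists_le_EkA2_and_EkA2_le {k : ℝ} (hk : 0 < k) :
    ∃ c > 0, ∃ C > 0, ∀ {l1 l2 l3 x1 x2 x3 : ℝ},
      l2 < l1 → l3 < l2 → x3 ≤ x2 → x1 ≤ x3 → l1 - l2 ≤ l2 - l3 →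
      c * (exp (l1 * (x2 - x3) - l3 * (x3 - x1)) *
          rootDecay k (l1 - l2) (l2 - l3) (x2 - x3) (x3 - x1)) ≤ EkA2 k x1 x2 x3 l1 l2 l3 ∧
      EkA2 k x1 x2 x3 l1 l2 l3 ≤ C * (exp (l1 * (x2 - x3) - l3 * (x3 - x1)) *
          rootDecay k (l1 - l2) (l2 - l3) (x2 - x3) (x3 - x1)) := by
  obtain ⟨c, hc, hlower⟩ := exists_le_integral_rootKernel hk
  obtain ⟨C, hC, hupper⟩ := exists_integral_rootKernel_le hk
  have := Gamma_pos_of_pos hk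
  have := Gamma_pos_of_pos (s := 3 * k) (by positivity)
  have := Gamma_pos_of_pos (s := k + 1 / 2) (by positivity)
  set N := 3 * Gamma (3 * k) / Gamma k ^ 2 * (Gamma (k + 1 / 2) / (√π * Gamma k)) with hN
  have : 0 < N := by positivity
  refine ⟨N * c, by positivity, N * C, by positivity,
    fun {l1 l2 l3 x1 x2 x3} h12 h23 hp hq hab => ?_⟩
  have ha : 0 < l1 - l2 := sub_pos.2 h12
  have : 0 < l2 - l3 := sub_pos.2 h23
  have hV : Vlam l1 l2 l3 = (l1 - l2) * (l1 - l2 + (l2 - l3)) * (l2 - l3) := by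
    rw [Vlam, sub_add_sub_cancel]
  have hVpos : 0 < Vlam l1 l2 l3 ^ (2 * k) := by
    rw [hV]
    positivity
  have hlower := hlower (sub_nonneg.2 hp) (sub_nonneg.2 hq) ha hab
  have hupper := hupper (sub_nonneg.2 hp) (sub_nonneg.2 hq) ha hab
  rw [← hV, mul_left_comm, ← le_div_iff₀' hVpos] at hlower
  rw [← hV, mul_left_comm, ← div_le_iff₀' hVpos] at hupper
  rw [EkA2_eq_integral_rootKernel k x1 x2 x3 h12.le h23.le, ← hN, mul_mul_mul_comm N c,
    mul_mul_mul_comm N C]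
  exact ⟨by gcongr, by gcongr⟩

theorem estimate_C231_case1_general (k : ℝ) (hk : 0 < k) :
    ∃ C : ℝ, 0 < C ∧ ∀ l1 l2 l3 x1 x2 x3 : ℝ,
      l2 < l1 → l3 < l2 → x3 ≤ x2 → x1 ≤ x3 → l1 - l2 ≤ l2 - l3 →
      (C⁻¹ * (exp (l1 * (x2 - x3) - l3 * (x3 - x1)) /
          ((1 + (l1 - l2) * (x2 - x3)) ^ (k + 1) * (1 + (l2 - l3) * (x3 - x1)) ^ (k + 1)
            * (1 + (l1 - l3) * (x2 - x1)) ^ k))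
        ≤ EkA2 k x1 x2 x3 l1 l2 l3 ∧
      EkA2 k x1 x2 x3 l1 l2 l3
        ≤ C * (exp (l1 * (x2 - x3) - l3 * (x3 - x1)) /
          ((1 + (l1 - l2) * (x2 - x3)) ^ (k + 1) * (1 + (l2 - l3) * (x3 - x1)) ^ (k + 1)
            * (1 + (l1 - l3) * (x2 - x1)) ^ k))) := by
  obtain ⟨c, hc, C, _, hbounds⟩ := exists_le_EkA2_and_EkA2_le hk
  refine ⟨max c⁻¹ C, by positivity, fun l1 l2 l3 x1 x2 x3 h12 h23 hp hq hab => ?_⟩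
  have hdecay := rootDecay_eq_inv (k := k) (sub_nonneg.2 h12.le) (sub_nonneg.2 h23.le)
    (sub_nonneg.2 hp) (sub_nonneg.2 hq)
  rw [sub_add_sub_cancel, sub_add_sub_cancel] at hdecay
  rw [div_eq_mul_inv, ← hdecay]
  obtain ⟨hlower, hupper⟩ := hbounds h12 h23 hp hq hab
  have := rootDecay_nonneg (k := k) (sub_nonneg.2 h12.le) (sub_nonneg.2 h23.le)
    (sub_nonneg.2 hp) (sub_nonneg.2 hq)
  constructor
  · refine le_trans ?_ hlower
    gcongr
    exact inv_le_of_inv_le₀ hc (le_max_left _ _)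
  · refine hupper.trans ?_
    gcongr
    exact le_max_right _ _

/-- Theorem 4.1: sharp estimate of the `A₂` Dunkl kernel. -/
theorem estimate_C231_case1 (k : ℝ) (hk : 0 < k) :
    ∃ C : ℝ, 0 < C ∧ ∀ l1 l2 l3 x1 x2 x3 : ℝ,
      l1 + l2 + l3 = 0 →
      l2 < l1 →
      l3 < l2 →
      x1 + x2 + x3 = 0 →
      x3 ≤ x2 →
      x1 ≤ x3 →
      l1 - l2 ≤ l2 - l3 →
      (C⁻¹ * (Real.exp (l1 * x2 + l2 * x3 + l3 * x1) /
          ((1 + (l1 - l2) * (x2 - x3)) ^ (k + 1) * (1 + (l2 - l3) * (x3 - x1)) ^ (k + 1)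
            * (1 + (l1 - l3) * (x2 - x1)) ^ k))
        ≤ EkA2 k x1 x2 x3 l1 l2 l3 ∧
      EkA2 k x1 x2 x3 l1 l2 l3
        ≤ C * (Real.exp (l1 * x2 + l2 * x3 + l3 * x1) /
          ((1 + (l1 - l2) * (x2 - x3)) ^ (k + 1) * (1 + (l2 - l3) * (x3 - x1)) ^ (k + 1)
            * (1 + (l1 - l3) * (x2 - x1)) ^ k))) := by
  obtain ⟨C, hC, hbounds⟩ := estimate_C231_case1_general k hk
  refine ⟨C, hC, fun l1 l2 l3 x1 x2 x3 hl h12 h23 _ hp hq hab => ?_⟩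
  rw [show l1 * x2 + l2 * x3 + l3 * x1 = l1 * (x2 - x3) - l3 * (x3 - x1) by
    linear_combination x3 * hl]
  exact hbounds l1 l2 l3 x1 x2 x3 h12 h23 hp hq hab
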